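/- Let n be a positive integer and let F be a field whose characteristic is 0 or an odd rational prime p. Then the anti-centralizer C̄(a^{-1}b) of the element a^{-1}b in the group algebra F V_{8n} is an F-subspace of dimension 4n−2 if n is odd, and 4n−4 if n is even; moreover the set {(a^{2k} − a^{−2k}), (a^{2k} − a^{−2k})b^2, (a^{2k−1} − a^{−(2k+1)})b, (a^{2k−1} − a^{−(2k+1)})b^3 : 1 ≤ k ≤ ⌊(n−1)/2⌋} ∪ {(a^{2k−1} − a^{−(2k−1)}b^2), (a^{2k−2} − a^{−2k}b^2)b : 1 ≤ k ≤ n} is a basis of C̄(a^{-1}b) over F. -/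

import Mathlib

/-- The relators of the presentation
`V_{8n} = ⟨a, b ∣ a^{2n} = b⁴ = 1, (ba)² = 1, (b⁻¹a)² = 1⟩`,
where `a` is the generator indexed by `0` and `b` the one indexed by `1`.
(The relations `ba = a⁻¹b⁻¹` and `b⁻¹a = a⁻¹b` are equivalent to
`(ba)² = 1` and `(b⁻¹a)² = 1` respectively.) -/
def V8nRels (n : ℕ) : Set (FreeGroup (Fin 2)) :=
  {(FreeGroup.of 0) ^ (2 * n), (FreeGroup.of 1) ^ 4,
   (FreeGroup.of 1 * FreeGroup.of 0) ^ 2,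
   ((FreeGroup.of 1)⁻¹ * FreeGroup.of 0) ^ 2}

/-- The group `V_{8n}` of order `8n`. -/
abbrev V8n (n : ℕ) : Type := PresentedGroup (V8nRels n)

/-- The generator `a` of `V_{8n}`. -/
def aV (n : ℕ) : V8n n := PresentedGroup.of 0

/-- The generator `b` of `V_{8n}`. -/
def bV (n : ℕ) : V8n n := PresentedGroup.of 1
/-- The anti-centralizer `C̄(β) = {α ∣ α * β = -(β * α)}` of an element `β` of an
`F`-algebra `A`, as an `F`-subspace of `A`. -/
def antiCentralizer (F : Type*) [CommSemiring F] {A : Type*} [Ring A] [Algebra F A]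
    (β : A) : Submodule F A where
  carrier := {α | α * β = -(β * α)}
  zero_mem' := by simp
  add_mem' := by
    intro x y hx hy
    simp only [Set.mem_setOf_eq] at *
    rw [add_mul, mul_add, hx, hy, neg_add]
  smul_mem' := by
    intro c x hx
    simp only [Set.mem_setOf_eq] at *
    rw [smul_mul_assoc, hx, mul_smul_comm, smul_neg]

/-- The claimed basis of the anti-centralizer `C̄(a⁻¹b)` in `F V_{8n}`:
`{(a^{2k} − a^{−2k}), (a^{2k} − a^{−2k})b², (a^{2k−1} − a^{−(2k+1)})b,
  (a^{2k−1} − a^{−(2k+1)})b³ : 1 ≤ k ≤ ⌊(n−1)/2⌋}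
  ∪ {(a^{2k−1} − a^{−(2k−1)}b²), (a^{2k−2} − a^{−2k}b²)b : 1 ≤ k ≤ n}`. -/
def antiCentralizerBasisAinvB (n : ℕ) (F : Type*) [Field F] :
    Set (MonoidAlgebra F (V8n n)) :=
  let a := aV n
  let b := bV n
  let σ := MonoidAlgebra.of F (V8n n)
  {x | ∃ k : ℕ, 1 ≤ k ∧ k ≤ (n - 1) / 2 ∧
      (x = σ (a ^ (2 * k)) - σ (a⁻¹ ^ (2 * k)) ∨
       x = (σ (a ^ (2 * k)) - σ (a⁻¹ ^ (2 * k))) * σ b ^ 2 ∨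
       x = (σ (a ^ (2 * k - 1)) - σ (a⁻¹ ^ (2 * k + 1))) * σ b ∨
       x = (σ (a ^ (2 * k - 1)) - σ (a⁻¹ ^ (2 * k + 1))) * σ b ^ 3)} ∪
  {x | ∃ k : ℕ, 1 ≤ k ∧ k ≤ n ∧
      (x = σ (a ^ (2 * k - 1)) - σ (a⁻¹ ^ (2 * k - 1) * b ^ 2) ∨
       x = (σ (a ^ (2 * k - 2)) - σ (a⁻¹ ^ (2 * k) * b ^ 2)) * σ b)}

/-! Put `g = a⁻¹b`, an involution. An `α ∈ FG` anticommutes with `g` exactly when its coefficients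
satisfy `α(g⁻¹xg) = -α(x)`. Since `2 ≠ 0`, such an `α` vanishes on the fixed points of conjugation
by `g`, and the differences `x - g⁻¹xg`, one for each orbit of size two, form a basis of the
anti-centralizer. The elements of `V_{8n}` have unique normal forms `aⁱ(b²)ᵉgᶠ` with `i`, `e`, `f`
modulo `2n`, `2`, `2`, and `g` conjugates this one to `a⁻ⁱ(b²)ᵉ⁺ⁱgᶠ`. Thus the fixed points are
those with `i ∈ {0, n}` even, and each orbit of size two contains exactly one element such that `i`
is even with `0 < i < n`, or `i` is odd and `e = 0`. -/

section ConjugationOrbits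

open MonoidAlgebra

variable {R G ι : Type*} [CommRing R] [Group G]

/-- The difference `x - x^g` in the group algebra `R[G]`, where `x^g = g⁻¹xg`: the candidate element
of the anti-centralizer of `g` supported on the orbit of `x` under conjugation by `g`. -/
noncomputable def conjDiff (R : Type*) [CommRing R] (g x : G) : MonoidAlgebra R G :=
  of R G x - of R G (g⁻¹ * x * g)

/-- The family `p` picks one element from each pair `{x, g⁻¹xg}` with `g⁻¹xg ≠ x`. It is meant for
elements `g` with `g²` central, for which these pairs are the nontrivial orbits of conjugation
by `g`. -/
structure IsConjTransversal (g : G) (p : ι → G) : Prop where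
  injective : Function.Injective p
  ne_conj : ∀ i j, p i ≠ g⁻¹ * p j * g
  exists_eq : ∀ x, g⁻¹ * x * g ≠ x → ∃ i, p i = x ∨ p i = g⁻¹ * x * g

theorem coeff_conj_of_mem_antiCentralizer {g : G} {α : MonoidAlgebra R G}
    (hα : α ∈ antiCentralizer R (of R G g)) (x : G) :
    α.coeff (g⁻¹ * x * g) = -α.coeff x := by
  have h : α * of R G g = -(of R G g * α) := hα
  have hx := congrArg (fun β => β.coeff (x * g)) h
  simp only [of_apply, coeff_mul_single_apply, coeff_neg, Finsupp.neg_apply,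
    coeff_single_mul_apply, mul_inv_cancel_right, mul_one, one_mul] at hx
  rw [hx, neg_neg, mul_assoc]

theorem conjDiff_mem_antiCentralizer {g : G} (hg : g ^ 2 ∈ Subgroup.center G) (x : G) :
    conjDiff R g x ∈ antiCentralizer R (of R G g) := by
  have hx : g⁻¹ * x * g * g = g * x := by
    rw [mul_assoc _ g g, ← sq, mul_assoc, Subgroup.mem_center_iff.1 hg x, sq]
    group
  change conjDiff R g x * of R G g = -(of R G g * conjDiff R g x)
  simp only [conjDiff, sub_mul, mul_sub, ← map_mul, hx, neg_sub]
  simp only [mul_assoc, mul_inv_cancel_left]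

theorem conjDiff_mul_of_commute {g y : G} (hy : Commute g y) (x : G) :
    conjDiff R g (x * y) = conjDiff R g x * of R G y := by
  have hconj : g⁻¹ * (x * y) * g = g⁻¹ * x * g * y := by
    simp only [mul_assoc, hy.eq]
  rw [conjDiff, conjDiff, hconj, sub_mul, map_mul, map_mul _ _ y]

namespace IsConjTransversal

variable {g : G} {p : ι → G}

theorem coeff_linearCombination_conjDiff (hp : IsConjTransversal g p) (c : ι →₀ R) (j : ι) :
    (Finsupp.linearCombination R (fun i => conjDiff R g (p i)) c).coeff (p j) = c j := by
  classical
  have hcoeff (i : ι) : (conjDiff R g (p i)).coeff (p j) = if i = j then 1 else 0 := by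
    simp [conjDiff, of_apply, Finsupp.single_apply, hp.injective.eq_iff, (hp.ne_conj j i).symm]
  simp [Finsupp.linearCombination_apply, coeff_finsuppSum, Finsupp.sum_apply, hcoeff,
    eq_comm (a := (0 : R))]

theorem linearIndependent_conjDiff (hp : IsConjTransversal g p) :
    LinearIndependent R (fun i => conjDiff R g (p i)) := by
  refine linearIndependent_iff.2 fun c hc => Finsupp.ext fun j => ?_
  rw [← hp.coeff_linearCombination_conjDiff c j, hc, coeff_zero, Finsupp.zero_apply,
    Finsupp.zero_apply]

theorem eq_zero_of_mem_antiCentralizer (hp : IsConjTransversal g p)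
    (h2 : (2 : R) ∈ nonZeroDivisors R) {α : MonoidAlgebra R G}
    (hα : α ∈ antiCentralizer R (of R G g)) (hαp : ∀ i, α.coeff (p i) = 0) : α = 0 := by
  ext x
  have hx := coeff_conj_of_mem_antiCentralizer hα x
  by_cases hfix : g⁻¹ * x * g = x
  · rw [hfix, eq_neg_iff_add_eq_zero, ← two_mul] at hx
    exact (mul_left_mem_nonZeroDivisors_eq_zero_iff h2).1 hx
  · obtain ⟨i, hi | hi⟩ := hp.exists_eq x hfix
    · exact hi ▸ hαp i
    · rw [← hi, hαp] at hx
      exact neg_eq_zero.1 hx.symm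

theorem span_conjDiff (hp : IsConjTransversal g p) (h2 : (2 : R) ∈ nonZeroDivisors R)
    (hg : g ^ 2 ∈ Subgroup.center G) :
    Submodule.span R (Set.range fun i => conjDiff R g (p i)) = antiCentralizer R (of R G g) := by
  have hle : Submodule.span R (Set.range fun i => conjDiff R g (p i)) ≤
      antiCentralizer R (of R G g) :=
    Submodule.span_le.2 (Set.range_subset_iff.2 fun i => conjDiff_mem_antiCentralizer hg (p i))
  refine le_antisymm hle fun α hα => ?_
  let c : ι →₀ R := α.coeff.comapDomain p hp.injective.injOn
  let β := Finsupp.linearCombination R (fun i => conjDiff R g (p i)) c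
  have hβ : β ∈ Submodule.span R (Set.range fun i => conjDiff R g (p i)) :=
    Finsupp.mem_span_range_iff_exists_finsupp.2 ⟨c, rfl⟩
  have hαβ : α - β = 0 := hp.eq_zero_of_mem_antiCentralizer h2 (sub_mem hα (hle hβ)) fun i => by
    rw [coeff_sub, Finsupp.sub_apply, hp.coeff_linearCombination_conjDiff,
      Finsupp.comapDomain_apply, sub_self]
  rwa [sub_eq_zero.1 hαβ]

end IsConjTransversal

end ConjugationOrbits

theorem two_ne_zero_of_odd_charP {R : Type*} [NonAssocSemiring R] [Nontrivial R] {p : ℕ}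
    [CharP R p] (hp : Odd p) : (2 : R) ≠ 0 :=
  Ring.two_ne_zero fun h => absurd ((ringChar.eq R p).symm.trans h ▸ hp) (by decide)

namespace V8n

variable (n : ℕ)

/-- The element `g = a⁻¹b`. It is an involution, and `V_{8n} = (⟨a⟩ × ⟨b²⟩) ⋊ ⟨g⟩`. -/
def gV : V8n n := (aV n)⁻¹ * bV n

theorem aV_pow_two_mul : aV n ^ (2 * n) = 1 :=
  PresentedGroup.one_of_mem (x := FreeGroup.of 0 ^ (2 * n)) (by simp [V8nRels])

theorem bV_sq_sq : (bV n ^ 2) ^ 2 = 1 := by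
  rw [← pow_mul]
  exact PresentedGroup.one_of_mem (x := FreeGroup.of 1 ^ 4) (by simp [V8nRels])

theorem bV_mul_aV_sq : (bV n * aV n) ^ 2 = 1 :=
  PresentedGroup.one_of_mem (x := (FreeGroup.of 1 * FreeGroup.of 0) ^ 2) (by simp [V8nRels])

theorem gV_sq : gV n ^ 2 = 1 := by
  have h : ((bV n)⁻¹ * aV n) ^ 2 = 1 :=
    PresentedGroup.one_of_mem (x := ((FreeGroup.of 1)⁻¹ * FreeGroup.of 0) ^ 2) (by simp [V8nRels])
  rw [← inv_eq_one, ← inv_pow, gV, mul_inv_rev, inv_inv, h]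

theorem gV_inv : (gV n)⁻¹ = gV n :=
  inv_eq_of_mul_eq_one_left (by rw [← sq, gV_sq])

theorem aV_mul_gV : aV n * gV n = bV n :=
  mul_inv_cancel_left _ _

theorem bV_mul_aV_inv : bV n * (aV n)⁻¹ = aV n * (bV n)⁻¹ := by
  have h := gV_inv n
  rw [gV, mul_inv_rev, inv_inv, inv_mul_eq_iff_eq_mul] at h
  rw [eq_mul_inv_iff_mul_eq, mul_assoc, ← h]

theorem bV_mul_aV : bV n * aV n = (aV n)⁻¹ * (bV n)⁻¹ := by
  simpa [sq, mul_eq_one_iff_eq_inv] using bV_mul_aV_sq n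

theorem commute_aV_bV_sq : Commute (aV n) (bV n ^ 2) := by
  have hinv : bV n ^ 2 = (bV n)⁻¹ * (bV n)⁻¹ := by
    rw [← mul_inv_rev, ← sq, eq_inv_iff_mul_eq_one, ← sq, bV_sq_sq]
  symm
  calc bV n ^ 2 * aV n = bV n * (aV n)⁻¹ * (bV n)⁻¹ := by
        rw [sq, mul_assoc, bV_mul_aV, mul_assoc]
    _ = aV n * bV n ^ 2 := by rw [bV_mul_aV_inv, hinv, mul_assoc]

theorem commute_gV_bV_sq : Commute (gV n) (bV n ^ 2) :=
  (commute_aV_bV_sq n).inv_left.mul_left (Commute.self_pow _ _)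

theorem semiconjBy_gV_aV : SemiconjBy (gV n) (aV n) ((aV n)⁻¹ * bV n ^ 2) := by
  calc gV n * aV n = (aV n)⁻¹ * bV n * (aV n * (bV n)⁻¹) * bV n := by simp [gV, mul_assoc]
    _ = (aV n)⁻¹ * bV n ^ 2 * gV n := by
        rw [← bV_mul_aV_inv]
        simp only [gV, sq, mul_assoc]

theorem semiconjBy_gV_aV_zpow (i : ℤ) :
    SemiconjBy (gV n) (aV n ^ i) (aV n ^ (-i) * (bV n ^ 2) ^ i) := by
  rw [zpow_neg, ← inv_zpow, ← (commute_aV_bV_sq n).inv_left.mul_zpow]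
  exact (semiconjBy_gV_aV n).zpow_right i

/-- The normal form `aⁱ(b²)ᵉgᶠ` of the elements of `V_{8n}`, where `g = a⁻¹b`. The exponents are
integers, to be read modulo `2n`, `2` and `2`. -/
def normalForm (i e f : ℤ) : V8n n := aV n ^ i * (bV n ^ 2) ^ e * gV n ^ f

theorem aV_zpow_mul_normalForm (j i e f : ℤ) :
    aV n ^ j * normalForm n i e f = normalForm n (j + i) e f := by
  simp only [normalForm, zpow_add, mul_assoc]

theorem gV_mul_normalForm (i e f : ℤ) :
    gV n * normalForm n i e f = normalForm n (-i) (e + i) (f + 1) := by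
  have h : gV n * (aV n ^ i * (bV n ^ 2) ^ e) = aV n ^ (-i) * (bV n ^ 2) ^ (e + i) * gV n := by
    rw [add_comm, zpow_add, ← mul_assoc (aV n ^ (-i))]
    exact (semiconjBy_gV_aV_zpow n i).mul_right ((commute_gV_bV_sq n).zpow_right e)
  rw [normalForm, ← mul_assoc, h, mul_assoc, ← zpow_one_add, add_comm 1, normalForm]

theorem gV_conj_normalForm (i e f : ℤ) :
    (gV n)⁻¹ * normalForm n i e f * gV n = normalForm n (-i) (e + i) f :=
  calc (gV n)⁻¹ * normalForm n i e f * gV n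
      = gV n * normalForm n i e f * (gV n)⁻¹ := by rw [gV_inv]
    _ = normalForm n (-i) (e + i) f := by
        rw [gV_mul_normalForm, normalForm, zpow_add_one, ← mul_assoc, mul_inv_cancel_right,
          normalForm]

/-- The homomorphism `a ↦ (r, s)`, `b ↦ (s, r)` to a product of dihedral groups. It is injective:
the first factor is the quotient by `⟨b²⟩`, and the second one detects `b²`. -/
def toDihedralProd : V8n n →* DihedralGroup (2 * n) × DihedralGroup 4 :=
  PresentedGroup.toGroup (f := ![(.r 1, .sr 0), (.sr 0, .r 1)]) (by
    rintro _ (rfl | rfl | rfl | rfl)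
    · exact Prod.ext (by simp) (by simp [pow_mul, sq])
    · exact Prod.ext (by simp [pow_succ]) rfl
    · simp [sq]
    · simp [sq])

theorem toDihedralProd_aV : toDihedralProd n (aV n) = (.r 1, .sr 0) :=
  PresentedGroup.toGroup.of _

theorem toDihedralProd_bV : toDihedralProd n (bV n) = (.sr 0, .r 1) :=
  PresentedGroup.toGroup.of _

theorem toDihedralProd_gV : toDihedralProd n (gV n) = (.sr 1, .sr 1) := by
  simp [gV, toDihedralProd_aV, toDihedralProd_bV]

variable {n} in
theorem dvd_of_normalForm_eq_one {i e f : ℤ} (h : normalForm n i e f = 1) :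
    2 * (n : ℤ) ∣ i ∧ 2 ∣ e ∧ 2 ∣ f := by
  have sr_zpow_two_mul {m : ℕ} (x : ZMod m) (k : ℤ) : (DihedralGroup.sr x) ^ (2 * k) = 1 := by
    rw [zpow_mul, zpow_ofNat, sq, DihedralGroup.sr_mul_self, one_zpow]
  have hφ := congrArg (toDihedralProd n) h
  simp only [normalForm, map_mul, map_zpow, map_one, toDihedralProd_aV,
    toDihedralProd_bV, toDihedralProd_gV, Prod.pow_mk, Prod.mk_mul_mk, Prod.mk_eq_one,
    ← zpow_natCast, ← zpow_mul, DihedralGroup.r_one_zpow, Nat.cast_ofNat, sr_zpow_two_mul,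
    mul_one] at hφ
  obtain ⟨hφ₁, hφ₂⟩ := hφ
  obtain ⟨f, rfl | rfl⟩ := Int.even_or_odd' f
  · rw [sr_zpow_two_mul, mul_one, DihedralGroup.one_def, DihedralGroup.r.injEq,
      ZMod.intCast_zmod_eq_zero_iff_dvd] at hφ₁
    push_cast at hφ₁
    obtain ⟨j, rfl⟩ := hφ₁
    rw [mul_assoc, mul_assoc 2, sr_zpow_two_mul, sr_zpow_two_mul, mul_one, one_mul,
      DihedralGroup.one_def, DihedralGroup.r.injEq, ZMod.intCast_zmod_eq_zero_iff_dvd] at hφ₂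
    exact ⟨dvd_mul_right _ _, by omega, dvd_mul_right _ _⟩
  · rw [zpow_add, sr_zpow_two_mul, one_mul, zpow_one, DihedralGroup.r_mul_sr] at hφ₁
    exact nomatch hφ₁

theorem normalForm_sub (i e f i' e' f' : ℤ) :
    normalForm n (i - i') (e - e') (f - f') =
      (aV n ^ i' * (bV n ^ 2) ^ e')⁻¹ * normalForm n i e f * (gV n ^ f')⁻¹ := by
  have hcomm : Commute (aV n ^ (-i' + i)) ((bV n ^ 2) ^ (-e')) :=
    (commute_aV_bV_sq n).zpow_zpow _ _
  rw [normalForm, sub_eq_neg_add i, sub_eq_neg_add e, zpow_add (bV n ^ 2), ← mul_assoc, hcomm.eq]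
  simp only [normalForm, zpow_add, zpow_neg, zpow_sub, mul_inv_rev, mul_assoc]

variable {n} in
theorem normalForm_eq_iff {i e f i' e' f' : ℤ} :
    normalForm n i e f = normalForm n i' e' f' ↔
      i ≡ i' [ZMOD 2 * n] ∧ e ≡ e' [ZMOD 2] ∧ f ≡ f' [ZMOD 2] := by
  constructor
  · intro h
    have hone : normalForm n (i' - i) (e' - e) (f' - f) = 1 := by
      rw [normalForm_sub, ← h, normalForm]
      group
    simpa only [Int.modEq_iff_dvd] using dvd_of_normalForm_eq_one hone
  · rintro ⟨hi, he, hf⟩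
    have ha : aV n ^ i = aV n ^ i' := by
      rw [zpow_eq_zpow_iff_modEq]
      exact hi.of_dvd (by exact_mod_cast orderOf_dvd_of_pow_eq_one (aV_pow_two_mul n))
    have hc : (bV n ^ 2) ^ e = (bV n ^ 2) ^ e' := by
      rw [zpow_eq_zpow_iff_modEq]
      exact he.of_dvd (by exact_mod_cast orderOf_dvd_of_pow_eq_one (bV_sq_sq n))
    have hg : gV n ^ f = gV n ^ f' := by
      rw [zpow_eq_zpow_iff_modEq]
      exact hf.of_dvd (by exact_mod_cast orderOf_dvd_of_pow_eq_one (gV_sq n))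
    rw [normalForm, normalForm, ha, hc, hg]

theorem exists_eq_normalForm (v : V8n n) : ∃ i e f : ℤ, v = normalForm n i e f := by
  have hv : v ∈ Subgroup.closure {aV n, gV n} := by
    refine PresentedGroup.generated_by _ _ (fun x => ?_) v
    have ha : aV n ∈ Subgroup.closure {aV n, gV n} := Subgroup.subset_closure (by simp)
    have hg : gV n ∈ Subgroup.closure {aV n, gV n} := Subgroup.subset_closure (by simp)
    have hb : bV n ∈ Subgroup.closure {aV n, gV n} := aV_mul_gV n ▸ mul_mem ha hg
    fin_cases x
    · exact ha
    · exact hb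
  induction hv using Subgroup.closure_induction_left with
  | one => exact ⟨0, 0, 0, by simp [normalForm]⟩
  | mul_left x hx y hy ih =>
    obtain ⟨i, e, f, rfl⟩ := ih
    obtain rfl | rfl := hx
    · exact ⟨1 + i, e, f, by rw [← aV_zpow_mul_normalForm, zpow_one]⟩
    · exact ⟨-i, e + i, f + 1, gV_mul_normalForm n i e f⟩
  | inv_mul_cancel x hx y hy ih =>
    obtain ⟨i, e, f, rfl⟩ := ih
    obtain rfl | rfl := hx
    · exact ⟨-1 + i, e, f, by rw [← aV_zpow_mul_normalForm, zpow_neg_one]⟩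
    · exact ⟨-i, e + i, f + 1, by rw [gV_inv, gV_mul_normalForm]⟩

theorem exists_eq_normalForm_natCast [NeZero n] (v : V8n n) :
    ∃ i < 2 * n, ∃ e f : Fin 2, v = normalForm n i (e : ℕ) (f : ℕ) := by
  obtain ⟨i, e, f, rfl⟩ := exists_eq_normalForm n v
  have hn : 0 < n := NeZero.pos n
  obtain ⟨i', hi'⟩ := Int.eq_ofNat_of_zero_le (Int.emod_nonneg i (b := 2 * n) (by omega))
  refine ⟨i', ?_, ⟨(e % 2).toNat, by omega⟩, ⟨(f % 2).toNat, by omega⟩,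
    normalForm_eq_iff.2 ⟨?_, ?_, ?_⟩⟩
  · have := Int.emod_lt_of_pos i (b := 2 * n) (by omega)
    omega
  · rw [← hi']
    exact Int.mod_modEq i _ |>.symm
  all_goals
    unfold Int.ModEq
    dsimp only
    omega

/-- Labels for the pairs of elements of `V_{8n}` swapped by conjugation by `g = a⁻¹b`. A label
`(s, f)` stands for a pair in the coset `⟨a, b²⟩gᶠ`, with even exponents of `a` for `s = inl (k, e)`
and odd ones for `s = inr k`. In the odd case the two elements have different exponents of `b²`, so
these need no label. -/
abbrev OrbitIndex : Type := (Finset.Icc 1 ((n - 1) / 2) × Fin 2 ⊕ Finset.Icc 1 n) × Fin 2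

/-- The representatives `a²ᵏ(b²)ᵉgᶠ` for `1 ≤ k ≤ ⌊(n - 1)/2⌋` and `a²ᵏ⁻¹gᶠ` for `1 ≤ k ≤ n` of the
pairs of elements of `V_{8n}` swapped by conjugation by `g = a⁻¹b`. -/
def orbitRep : OrbitIndex n → V8n n
  | (.inl (k, e), f) => normalForm n (2 * (k : ℕ)) (e : ℕ) (f : ℕ)
  | (.inr k, f) => normalForm n (2 * (k : ℕ) - 1) 0 (f : ℕ)

theorem card_orbitIndex : Fintype.card (OrbitIndex n) = ((n - 1) / 2 * 2 + n) * 2 := by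
  simp

theorem fin_two_eq_of_intModEq {e e' : Fin 2} (h : (e : ℕ) ≡ (e' : ℕ) [ZMOD 2]) : e = e' :=
  Fin.ext (by unfold Int.ModEq at h; omega)

variable {n} in
theorem int_emod_two_eq_of_normalForm_eq {i e f i' e' f' : ℤ}
    (h : normalForm n i e f = normalForm n i' e' f') : i % 2 = i' % 2 :=
  (normalForm_eq_iff.1 h).1.of_mul_right _

variable {n} in
theorem eq_of_normalForm_eq {i e f i' e' f' : ℤ} (h : normalForm n i e f = normalForm n i' e' f')
    (hi : |i' - i| < 2 * n) : i = i' := by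
  have := Int.eq_zero_of_abs_lt_dvd (Int.modEq_iff_dvd.1 (normalForm_eq_iff.1 h).1) hi
  omega

theorem orbitRep_injective : Function.Injective (orbitRep n) := by
  rintro ⟨⟨⟨k, hk⟩, e⟩ | ⟨k, hk⟩, f⟩ ⟨⟨⟨k', hk'⟩, e'⟩ | ⟨k', hk'⟩, f'⟩ h <;>
    dsimp only [orbitRep] at h <;> rw [Finset.mem_Icc] at hk hk' <;>
    have hpar := int_emod_two_eq_of_normalForm_eq h <;>
    obtain ⟨-, he, hf⟩ := normalForm_eq_iff.1 h <;>
    obtain rfl := fin_two_eq_of_intModEq hf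
  · obtain rfl := fin_two_eq_of_intModEq he
    have hkk : k = k' := by
      have := eq_of_normalForm_eq h (abs_lt.2 (by omega))
      omega
    subst hkk
    rfl
  · omega
  · omega
  · have hkk : k = k' := by
      have := eq_of_normalForm_eq h (abs_lt.2 (by omega))
      omega
    subst hkk
    rfl

theorem orbitRep_ne_conj (x y : OrbitIndex n) :
    orbitRep n x ≠ (gV n)⁻¹ * orbitRep n y * gV n := by
  obtain ⟨⟨⟨k, hk⟩, e⟩ | ⟨k, hk⟩, f⟩ := x <;>
    obtain ⟨⟨⟨k', hk'⟩, e'⟩ | ⟨k', hk'⟩, f'⟩ := y <;>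
    intro h <;> simp only [orbitRep, gV_conj_normalForm] at h <;>
    rw [Finset.mem_Icc] at hk hk' <;>
    have hpar := int_emod_two_eq_of_normalForm_eq h
  · have := eq_of_normalForm_eq h (abs_lt.2 (by omega))
    omega
  · omega
  · omega
  · obtain ⟨-, he, -⟩ := normalForm_eq_iff.1 h
    unfold Int.ModEq at he
    omega

theorem exists_orbitRep_eq_of_even {k : ℕ} (hk : k < n) {e f : Fin 2}
    (hx : (gV n)⁻¹ * normalForm n (2 * k) (e : ℕ) (f : ℕ) * gV n ≠
      normalForm n (2 * k) (e : ℕ) (f : ℕ)) :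
    ∃ x, orbitRep n x = normalForm n (2 * k) (e : ℕ) (f : ℕ) ∨
      orbitRep n x = (gV n)⁻¹ * normalForm n (2 * k) (e : ℕ) (f : ℕ) * gV n := by
  have he : (e : ℤ) + 2 * k ≡ e [ZMOD 2] := by simp [Int.ModEq]
  rw [gV_conj_normalForm] at hx ⊢
  have hk0 : k ≠ 0 := by
    rintro rfl
    exact hx (by simp)
  have hkn : 2 * k ≠ n := fun h =>
    hx (normalForm_eq_iff.2 ⟨Int.modEq_iff_dvd.2 ⟨1, by omega⟩, he, rfl⟩)
  obtain hlt | hgt := hkn.lt_or_gt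
  · exact ⟨(.inl (⟨k, Finset.mem_Icc.2 (by omega)⟩, e), f), .inl rfl⟩
  · refine ⟨(.inl (⟨n - k, Finset.mem_Icc.2 (by omega)⟩, e), f), .inr ?_⟩
    exact normalForm_eq_iff.2 ⟨Int.modEq_iff_dvd.2 ⟨-1, by dsimp only; omega⟩, he.symm, rfl⟩

theorem exists_orbitRep_eq_of_odd {k : ℕ} (hk : k < n) (e f : Fin 2) :
    ∃ x, orbitRep n x = normalForm n (2 * k + 1) (e : ℕ) (f : ℕ) ∨
      orbitRep n x = (gV n)⁻¹ * normalForm n (2 * k + 1) (e : ℕ) (f : ℕ) * gV n := by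
  rw [gV_conj_normalForm]
  fin_cases e
  · refine ⟨(.inr ⟨k + 1, Finset.mem_Icc.2 (by omega)⟩, f), .inl ?_⟩
    exact normalForm_eq_iff.2 ⟨Int.modEq_iff_dvd.2 ⟨0, by dsimp only; omega⟩, rfl, rfl⟩
  · refine ⟨(.inr ⟨n - k, Finset.mem_Icc.2 (by omega)⟩, f), .inr ?_⟩
    exact normalForm_eq_iff.2 ⟨Int.modEq_iff_dvd.2 ⟨-1, by dsimp only; omega⟩,
      Int.modEq_iff_dvd.2 ⟨k + 1, by dsimp only; omega⟩, rfl⟩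

theorem isConjTransversal_orbitRep [NeZero n] : IsConjTransversal (gV n) (orbitRep n) where
  injective := orbitRep_injective n
  ne_conj := orbitRep_ne_conj n
  exists_eq x hx := by
    obtain ⟨i, hi, e, f, rfl⟩ := exists_eq_normalForm_natCast n x
    obtain ⟨k, rfl | rfl⟩ := Nat.even_or_odd' i <;> push_cast at hx ⊢
    · exact exists_orbitRep_eq_of_even n (by omega) hx
    · exact exists_orbitRep_eq_of_odd n (by omega) e f

section Basis

open MonoidAlgebra

variable (R : Type*) [CommRing R]

theorem gV_conj_aV_pow (i : ℕ) :
    (gV n)⁻¹ * aV n ^ i * gV n = (aV n)⁻¹ ^ i * (bV n ^ 2) ^ i := by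
  have h := gV_conj_normalForm n i 0 0
  simpa only [normalForm, zpow_zero, zero_add, mul_one, zpow_neg, zpow_natCast, ← inv_pow] using h

theorem conjDiff_aV_pow_even (k : ℕ) :
    conjDiff R (gV n) (aV n ^ (2 * k)) =
      of R _ (aV n ^ (2 * k)) - of R _ ((aV n)⁻¹ ^ (2 * k)) := by
  rw [conjDiff, gV_conj_aV_pow, pow_mul (bV n ^ 2), bV_sq_sq, one_pow, mul_one]

theorem conjDiff_aV_pow_odd {k : ℕ} (hk : 1 ≤ k) :
    conjDiff R (gV n) (aV n ^ (2 * k - 1)) =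
      of R _ (aV n ^ (2 * k - 1)) - of R _ ((aV n)⁻¹ ^ (2 * k - 1) * bV n ^ 2) := by
  obtain ⟨j, rfl⟩ := Nat.exists_eq_add_of_le' hk
  rw [conjDiff, gV_conj_aV_pow, show 2 * (j + 1) - 1 = 2 * j + 1 from rfl, pow_succ (bV n ^ 2),
    pow_mul (bV n ^ 2), bV_sq_sq, one_pow, one_mul]

theorem conjDiff_aV_pow_even_mul_gV {k : ℕ} (hk : 1 ≤ k) :
    conjDiff R (gV n) (aV n ^ (2 * k) * gV n) =
      (of R _ (aV n ^ (2 * k - 1)) - of R _ ((aV n)⁻¹ ^ (2 * k + 1))) * of R _ (bV n) := by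
  have ha : aV n ^ (2 * k) * (aV n)⁻¹ = aV n ^ (2 * k - 1) := by
    rw [mul_inv_eq_iff_eq_mul, pow_sub_one_mul (by omega)]
  rw [conjDiff_mul_of_commute (Commute.refl _), conjDiff_aV_pow_even, gV, map_mul, ← mul_assoc,
    sub_mul (of R _ _), ← map_mul, ← map_mul, ← pow_succ, ha]

theorem conjDiff_aV_pow_odd_mul_gV {k : ℕ} (hk : 1 ≤ k) :
    conjDiff R (gV n) (aV n ^ (2 * k - 1) * gV n) =
      (of R _ (aV n ^ (2 * k - 2)) - of R _ ((aV n)⁻¹ ^ (2 * k) * bV n ^ 2)) * of R _ (bV n) := by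
  have ha : aV n ^ (2 * k - 1) * (aV n)⁻¹ = aV n ^ (2 * k - 2) := by
    rw [mul_inv_eq_iff_eq_mul, ← pow_succ]
    congr 1
    omega
  have hb : (aV n)⁻¹ ^ (2 * k - 1) * bV n ^ 2 * (aV n)⁻¹ = (aV n)⁻¹ ^ (2 * k) * bV n ^ 2 := by
    rw [mul_assoc, ← (commute_aV_bV_sq n).inv_left.eq, ← mul_assoc, pow_sub_one_mul (by omega)]
  rw [conjDiff_mul_of_commute (Commute.refl _), conjDiff_aV_pow_odd n R hk, gV, 
    map_mul (of R _) (aV n)⁻¹, ← mul_assoc, sub_mul (of R _ _), ← map_mul, ← map_mul, ha, hb]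

theorem conjDiff_orbitRep_inl (k : Finset.Icc 1 ((n - 1) / 2)) (e f : Fin 2) :
    conjDiff R (gV n) (orbitRep n (.inl (k, e), f)) =
      conjDiff R (gV n) (aV n ^ (2 * (k : ℕ)) * gV n ^ (f : ℕ)) *
        of R _ (bV n) ^ (2 * (e : ℕ)) := by
  have hcomm := ((commute_gV_bV_sq n).pow_pow (f : ℕ) (e : ℕ)).eq
  rw [← map_pow, pow_mul (bV n), ← conjDiff_mul_of_commute ((commute_gV_bV_sq n).pow_right _),
    mul_assoc, hcomm, ← mul_assoc]
  simp only [orbitRep, normalForm]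
  norm_cast

theorem orbitRep_inr (k : Finset.Icc 1 n) (f : Fin 2) :
    orbitRep n (.inr k, f) = aV n ^ (2 * (k : ℕ) - 1) * gV n ^ (f : ℕ) := by
  have hk : ((2 * k - 1 : ℕ) : ℤ) = 2 * (k : ℕ) - 1 := by
    have := (Finset.mem_Icc.1 k.2).1
    omega
  rw [orbitRep, normalForm, zpow_zero, mul_one, ← hk, zpow_natCast, zpow_natCast]

theorem exists_conjDiff_orbitRep_inl_eq_iff (k : Finset.Icc 1 ((n - 1) / 2))
    (x : MonoidAlgebra R (V8n n)) :
    (∃ e f, conjDiff R (gV n) (orbitRep n (.inl (k, e), f)) = x) ↔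
      x = of R _ (aV n ^ (2 * (k : ℕ))) - of R _ ((aV n)⁻¹ ^ (2 * (k : ℕ))) ∨
      x = (of R _ (aV n ^ (2 * (k : ℕ))) - of R _ ((aV n)⁻¹ ^ (2 * (k : ℕ)))) *
        of R _ (bV n) ^ 2 ∨
      x = (of R _ (aV n ^ (2 * (k : ℕ) - 1)) - of R _ ((aV n)⁻¹ ^ (2 * (k : ℕ) + 1))) *
        of R _ (bV n) ∨
      x = (of R _ (aV n ^ (2 * (k : ℕ) - 1)) - of R _ ((aV n)⁻¹ ^ (2 * (k : ℕ) + 1))) *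
        of R _ (bV n) ^ 3 := by
  have hk := (Finset.mem_Icc.1 k.2).1
  simp only [conjDiff_orbitRep_inl, Fin.exists_fin_two, Fin.val_zero, Fin.val_one, pow_zero,
    pow_one, mul_zero, mul_one, conjDiff_aV_pow_even, conjDiff_aV_pow_even_mul_gV n R hk,
    eq_comm (b := x), pow_succ' _ 2, mul_assoc]
  tauto

theorem exists_conjDiff_orbitRep_inr_eq_iff (k : Finset.Icc 1 n) (x : MonoidAlgebra R (V8n n)) :
    (∃ f, conjDiff R (gV n) (orbitRep n (.inr k, f)) = x) ↔
      x = of R _ (aV n ^ (2 * (k : ℕ) - 1)) -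
        of R _ ((aV n)⁻¹ ^ (2 * (k : ℕ) - 1) * bV n ^ 2) ∨
      x = (of R _ (aV n ^ (2 * (k : ℕ) - 2)) -
        of R _ ((aV n)⁻¹ ^ (2 * (k : ℕ)) * bV n ^ 2)) * of R _ (bV n) := by
  have hk := (Finset.mem_Icc.1 k.2).1
  simp only [orbitRep_inr, Fin.exists_fin_two, Fin.val_zero, Fin.val_one, pow_zero, pow_one,
    mul_one, conjDiff_aV_pow_odd n R hk, conjDiff_aV_pow_odd_mul_gV n R hk, eq_comm (b := x)]

theorem antiCentralizerBasisAinvB_eq_range (F : Type*) [Field F] :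
    antiCentralizerBasisAinvB n F = Set.range fun x => conjDiff F (gV n) (orbitRep n x) := by
  ext x
  rw [Set.mem_range]
  simp only [Prod.exists, Sum.exists, exists_conjDiff_orbitRep_inl_eq_iff,
    exists_conjDiff_orbitRep_inr_eq_iff, Subtype.exists, Finset.mem_Icc, exists_prop, and_assoc]
  rfl

end Basis

end V8n


/-- If `char F` is `0` or an odd prime, then the anti-centralizer
`C̄(a⁻¹b)` in `F V_{8n}` has dimension `4n−2` over `F` when `n` is odd and `4n−4`
when `n` is even, and the set `antiCentralizerBasisAinvB n F` is a basis of it. -/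
theorem antiCentralizer_ainvb_V8n (n : ℕ) (hn : 0 < n) (F : Type*) [Field F]
    (hchar : CharZero F ∨ ∃ p : ℕ, p.Prime ∧ Odd p ∧ CharP F p) :
    (Odd n →
      Module.finrank F
        (antiCentralizer F (MonoidAlgebra.of F (V8n n) ((aV n)⁻¹ * bV n))) = 4 * n - 2) ∧
    (Even n →
      Module.finrank F
        (antiCentralizer F (MonoidAlgebra.of F (V8n n) ((aV n)⁻¹ * bV n))) = 4 * n - 4) ∧
    LinearIndependent F ((↑) : antiCentralizerBasisAinvB n F → MonoidAlgebra F (V8n n)) ∧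
    Submodule.span F (antiCentralizerBasisAinvB n F) =
      antiCentralizer F (MonoidAlgebra.of F (V8n n) ((aV n)⁻¹ * bV n)) := by
  have : NeZero n := ⟨hn.ne'⟩
  have h2 : (2 : F) ≠ 0 := by
    obtain _ | ⟨p, -, hp, _⟩ := hchar
    exacts [two_ne_zero, two_ne_zero_of_odd_charP hp]
  have htrans := V8n.isConjTransversal_orbitRep n
  have hli := htrans.linearIndependent_conjDiff (R := F)
  have hspan := htrans.span_conjDiff (mem_nonZeroDivisors_of_ne_zero h2)
    (V8n.gV_sq n ▸ one_mem (Subgroup.center (V8n n)))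
  have hdim := finrank_span_eq_card hli
  rw [hspan, V8n.card_orbitIndex] at hdim
  rw [V8n.antiCentralizerBasisAinvB_eq_range]
  refine ⟨fun hodd => hdim.trans ?_, fun heven => hdim.trans ?_, hli.linearIndepOn_id, hspan⟩
  · obtain ⟨m, rfl⟩ := hodd
    omega
  · obtain ⟨m, rfl⟩ := heven
    omega
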